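/- Under the stated hypotheses, let u : W → ℝ be smooth and positively homogeneous of degree 0 in y (u(x,ty) = u(x,y) for t > 0). Then at every point of W where F = 1: |X(∇^·u)|² = |∇^·(Xu)|² + |∇^:u|² − 2⟨∇^:u, ∇^·(Xu)⟩ + ⟨Y(y), ∇^·u⟩², where Y(y)^i := Y^i_j y^j and for a semibasic vector field V, (XV)^i := y^k V^i_{:k}. -/

import Mathlib

noncomputable section

/-- A point of the local chart `W ⊆ ℝⁿ × (ℝⁿ ∖ {0})` of `TM ∖ {0}`. -/
abbrev Pt (n : ℕ) := (Fin n → ℝ) × (Fin n → ℝ)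

/-- Partial derivative in the `k`-th base (`x`) direction. -/
def pdx {n : ℕ} (k : Fin n) (f : Pt n → ℝ) (z : Pt n) : ℝ :=
  fderiv ℝ f z (Pi.single k 1, 0)

/-- Partial derivative in the `k`-th fibre (`y`) direction. -/
def pdy {n : ℕ} (k : Fin n) (f : Pt n → ℝ) (z : Pt n) : ℝ :=
  fderiv ℝ f z (0, Pi.single k 1)

/-- The fundamental tensor `g_{ij} = ½ ∂²(F²)/∂y^i∂y^j`. -/
def gF {n : ℕ} (F : Pt n → ℝ) (i j : Fin n) : Pt n → ℝ :=
  fun z => (1 / 2 : ℝ) * pdy i (pdy j (fun w => F w ^ 2)) z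

/-- The Cartan tensor `C_{ijk} = ¼ ∂³(F²)/∂y^i∂y^j∂y^k`. -/
def CF {n : ℕ} (F : Pt n → ℝ) (i j k : Fin n) : Pt n → ℝ :=
  fun z => (1 / 4 : ℝ) * pdy i (pdy j (pdy k (fun w => F w ^ 2))) z

/-- `y_k := g_{kj} y^j`. -/
def ylow {n : ℕ} (F : Pt n → ℝ) (k : Fin n) : Pt n → ℝ :=
  fun z => ∑ j, gF F k j z * z.2 j

/-- `N^i_j := Γ^i_{jk} y^k`. -/
def Nc {n : ℕ} (Γ : Fin n → Fin n → Fin n → Pt n → ℝ) (i j : Fin n) : Pt n → ℝ :=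
  fun z => ∑ k, Γ i j k z * z.2 k

/-- Horizontal derivative of a scalar: `u_{|k} := ∂u/∂x^k − N^p_k ∂u/∂y^p`. -/
def dhS {n : ℕ} (Γ : Fin n → Fin n → Fin n → Pt n → ℝ) (k : Fin n) (u : Pt n → ℝ) :
    Pt n → ℝ :=
  fun z => pdx k u z - ∑ p, Nc Γ p k z * pdy p u z

/-- The Chern curvature contraction `P^i_{lk} := −y^j ∂Γ^i_{jl}/∂y^k`. -/
def Pc {n : ℕ} (Γ : Fin n → Fin n → Fin n → Pt n → ℝ) (i l k : Fin n) : Pt n → ℝ :=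
  fun z => -∑ j, z.2 j * pdy k (Γ i j l) z

/-- The Riemann curvature tensor `R^i_{jkl}` of the connection. -/
def Rfull {n : ℕ} (Γ : Fin n → Fin n → Fin n → Pt n → ℝ) (i j k l : Fin n) :
    Pt n → ℝ :=
  fun z => pdx k (Γ i j l) z - pdx l (Γ i j k) z
    + (∑ m, pdy m (Γ i j k) z * Nc Γ m l z)
    - (∑ m, pdy m (Γ i j l) z * Nc Γ m k z)
    + (∑ m, Γ m j l z * Γ i m k z) - ∑ m, Γ m j k z * Γ i m l z

/-- `R^i_{kl} := y^j R^i_{jkl}`. -/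
def Rc {n : ℕ} (Γ : Fin n → Fin n → Fin n → Pt n → ℝ) (i k l : Fin n) : Pt n → ℝ :=
  fun z => ∑ j, z.2 j * Rfull Γ i j k l z

/-- The Lorentz force `Y^i_j := Ω_{jk} g^{ik}` (with `Ω` a function of `x` only). -/
def Yl {n : ℕ} (Ω : Fin n → Fin n → (Fin n → ℝ) → ℝ)
    (ginv : Fin n → Fin n → Pt n → ℝ) (i j : Fin n) : Pt n → ℝ :=
  fun z => ∑ k, Ω j k z.1 * ginv i k z

/-- Magnetic derivative of a scalar: `u_{:k} := u_{|k} + F Y^j_k u_{·j}`. -/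
def dmS {n : ℕ} (F : Pt n → ℝ) (Γ : Fin n → Fin n → Fin n → Pt n → ℝ)
    (Ω : Fin n → Fin n → (Fin n → ℝ) → ℝ) (ginv : Fin n → Fin n → Pt n → ℝ)
    (k : Fin n) (u : Pt n → ℝ) : Pt n → ℝ :=
  fun z => dhS Γ k u z + F z * ∑ j, Yl Ω ginv j k z * pdy j u z

/-- Horizontal covariant derivative of the Lorentz force:
`Y^i_{j|k} := ∂Y^i_j/∂x^k − N^p_k ∂Y^i_j/∂y^p + Γ^i_{kp} Y^p_j − Γ^p_{kj} Y^i_p`. -/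
def Ydh {n : ℕ} (Γ : Fin n → Fin n → Fin n → Pt n → ℝ)
    (Ω : Fin n → Fin n → (Fin n → ℝ) → ℝ) (ginv : Fin n → Fin n → Pt n → ℝ)
    (i j k : Fin n) : Pt n → ℝ :=
  fun z => pdx k (Yl Ω ginv i j) z - (∑ p, Nc Γ p k z * pdy p (Yl Ω ginv i j) z)
    + (∑ p, Γ i k p z * Yl Ω ginv p j z) - ∑ p, Γ p k j z * Yl Ω ginv i p z

/-- The twisted curvature `R̃^i_{lk}` of the magnetic flow. -/
def Rt {n : ℕ} (F : Pt n → ℝ) (Γ : Fin n → Fin n → Fin n → Pt n → ℝ)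
    (Ω : Fin n → Fin n → (Fin n → ℝ) → ℝ) (ginv : Fin n → Fin n → Pt n → ℝ)
    (i l k : Fin n) : Pt n → ℝ :=
  fun z => Rc Γ i l k z
    + (Ydh Γ Ω ginv i l k z - Ydh Γ Ω ginv i k l z)
    - ((∑ m, Pc Γ i l m z * Yl Ω ginv m k z) - ∑ m, Pc Γ i k m z * Yl Ω ginv m l z)
    + ((∑ j, Yl Ω ginv j l z * pdy j (Yl Ω ginv i k) z)
        - ∑ j, Yl Ω ginv j k z * pdy j (Yl Ω ginv i l) z)
    + ∑ s, ylow F s z * (Yl Ω ginv s k z * Yl Ω ginv i l z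
        - Yl Ω ginv s l z * Yl Ω ginv i k z)

/-- `∇^·u := (g^{ij} u_{·j})`. -/
def nablaV {n : ℕ} (ginv : Fin n → Fin n → Pt n → ℝ) (u : Pt n → ℝ) (i : Fin n) :
    Pt n → ℝ :=
  fun z => ∑ j, ginv i j z * pdy j u z

/-- `∇^:u := (g^{ij} u_{:j})`. -/
def nablaM {n : ℕ} (F : Pt n → ℝ) (Γ : Fin n → Fin n → Fin n → Pt n → ℝ)
    (Ω : Fin n → Fin n → (Fin n → ℝ) → ℝ) (ginv : Fin n → Fin n → Pt n → ℝ)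
    (u : Pt n → ℝ) (i : Fin n) : Pt n → ℝ :=
  fun z => ∑ j, ginv i j z * dmS F Γ Ω ginv j u z

/-- The generator applied to a scalar: `Xu := y^k u_{:k}`. -/
def Xs {n : ℕ} (F : Pt n → ℝ) (Γ : Fin n → Fin n → Fin n → Pt n → ℝ)
    (Ω : Fin n → Fin n → (Fin n → ℝ) → ℝ) (ginv : Fin n → Fin n → Pt n → ℝ)
    (u : Pt n → ℝ) : Pt n → ℝ :=
  fun z => ∑ k, z.2 k * dmS F Γ Ω ginv k u z

/-- `⟨U,V⟩ := g_{ij} U^i V^j`. -/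
def iprod {n : ℕ} (F : Pt n → ℝ) (U V : Fin n → Pt n → ℝ) : Pt n → ℝ :=
  fun z => ∑ i, ∑ j, gF F i j z * U i z * V j z

/-- Magnetic derivative of a semibasic vector field:
`U^i_{:k} := U^i_{|k} + F Y^j_k U^i_{·j}`. -/
def dmVec {n : ℕ} (F : Pt n → ℝ) (Γ : Fin n → Fin n → Fin n → Pt n → ℝ)
    (Ω : Fin n → Fin n → (Fin n → ℝ) → ℝ) (ginv : Fin n → Fin n → Pt n → ℝ)
    (k : Fin n) (U : Fin n → Pt n → ℝ) (i : Fin n) : Pt n → ℝ :=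
  fun z => pdx k (U i) z - (∑ p, Nc Γ p k z * pdy p (U i) z)
    + (∑ p, Γ i k p z * U p z)
    + F z * ∑ j, Yl Ω ginv j k z * pdy j (U i) z

/-- The generator applied to a semibasic vector field: `(XV)^i := y^k V^i_{:k}`. -/
def XVec {n : ℕ} (F : Pt n → ℝ) (Γ : Fin n → Fin n → Fin n → Pt n → ℝ)
    (Ω : Fin n → Fin n → (Fin n → ℝ) → ℝ) (ginv : Fin n → Fin n → Pt n → ℝ)
    (V : Fin n → Pt n → ℝ) (i : Fin n) : Pt n → ℝ :=
  fun z => ∑ k, z.2 k * dmVec F Γ Ω ginv k V i z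

/-- The Lorentz force applied to `y`: `Y(y)^i := Y^i_j y^j`. -/
def Yy {n : ℕ} (Ω : Fin n → Fin n → (Fin n → ℝ) → ℝ)
    (ginv : Fin n → Fin n → Pt n → ℝ) (i : Fin n) : Pt n → ℝ :=
  fun z => ∑ j, Yl Ω ginv i j z * z.2 j

/-!
On scalars, `X` is the derivative along a vector field on the chart, so that `∂_y` can be commuted
with it. Together with the compatibility of `g` with the connection, the commutator gives
`g X(∇^·u) = ∂_y(Xu) - u_: - ⟨Y(y), ∇^·u⟩ ∂_y F`: the Cartan terms coming from the derivative of
`g` along `X` and from the vertical derivative of the Lorentz force cancel. Since `F ∂_y F = g y`,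
this reads `X(∇^·u) = (∇^·(Xu) - ∇^:u) - (⟨Y(y), ∇^·u⟩ / F) y`, and differentiating Euler's
relation `y^i u_{·i} = 0` along `X` shows that the bracket is `g`-orthogonal to `y`. As
`⟨y, y⟩ = F²`, the formula is the theorem of Pythagoras.
-/

section

open Filter Topology Matrix

section Calculus

variable {𝕜 E G m : Type*} [RCLike 𝕜] [NormedAddCommGroup E] [NormedSpace 𝕜 E]
  [NormedAddCommGroup G] [NormedSpace 𝕜 G] {z : E}

theorem fderiv_fderiv_apply {f : E → G} {S : E → E} (hf : ContDiffAt 𝕜 2 f z)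
    (hS : DifferentiableAt 𝕜 S z) (v : E) :
    fderiv 𝕜 (fun w => fderiv 𝕜 f w (S w)) z v =
      fderiv 𝕜 (fun w => fderiv 𝕜 f w v) z (S z) + fderiv 𝕜 f z (fderiv 𝕜 S z v) := by
  have hdf : DifferentiableAt 𝕜 (fderiv 𝕜 f) z :=
    (hf.fderiv_right (m := 1) le_rfl).differentiableAt one_ne_zero
  rw [fderiv_clm_apply hdf hS, fderiv_clm_apply hdf (differentiableAt_const v)]
  simp [(hf.isSymmSndFDerivAt (by simp)).eq v (S z), add_comm]

theorem differentiableAt_fderiv_apply {f : E → G} (hf : ContDiffAt 𝕜 2 f z) (v : E) :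
    DifferentiableAt 𝕜 (fun w => fderiv 𝕜 f w v) z :=
  ((hf.fderiv_right (m := 1) le_rfl).differentiableAt one_ne_zero).clm_apply
    (differentiableAt_const v)

theorem contDiffAt_fderiv_apply {k : ℕ∞} {f : E → G} (hf : ContDiffAt 𝕜 (k + 1) f z) (v : E) :
    ContDiffAt 𝕜 k (fun w => fderiv 𝕜 f w v) z :=
  (hf.fderiv_right le_rfl).clm_apply contDiffAt_const

variable [Fintype m]

theorem differentiableAt_dotProduct {a b : E → m → 𝕜} (ha : DifferentiableAt 𝕜 a z)
    (hb : DifferentiableAt 𝕜 b z) : DifferentiableAt 𝕜 (fun w => a w ⬝ᵥ b w) z := by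
  simp only [dotProduct]
  fun_prop

theorem fderiv_dotProduct {a b : E → m → 𝕜} (ha : DifferentiableAt 𝕜 a z)
    (hb : DifferentiableAt 𝕜 b z) (v : E) :
    fderiv 𝕜 (fun w => a w ⬝ᵥ b w) z v = fderiv 𝕜 a z v ⬝ᵥ b z + a z ⬝ᵥ fderiv 𝕜 b z v := by
  have hai := differentiableAt_pi.1 ha
  have hbi := differentiableAt_pi.1 hb
  simp only [dotProduct]
  rw [fderiv_fun_sum fun i _ => (hai i).fun_mul (hbi i), ← Finset.sum_add_distrib,
    _root_.sum_apply]
  refine Finset.sum_congr rfl fun i _ => ?_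
  rw [fderiv_fun_mul (hai i) (hbi i), fderiv_apply ha, fderiv_apply hb]
  simp [mul_comm, add_comm]

theorem differentiableAt_det [DecidableEq m] {A : E → Matrix m m 𝕜}
    (hA : ∀ i j, DifferentiableAt 𝕜 (fun w => A w i j) z) :
    DifferentiableAt 𝕜 (fun w => (A w).det) z := by
  simp only [det_apply']
  exact .fun_sum fun σ _ => (differentiableAt_const _).mul
    (HasFDerivAt.finsetProd fun i _ => (hA (σ i) i).hasFDerivAt).differentiableAt

theorem differentiableAt_matrix_inv [DecidableEq m] {A : E → Matrix m m 𝕜}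
    (hA : ∀ i j, DifferentiableAt 𝕜 (fun w => A w i j) z) (hdet : (A z).det ≠ 0) (i j : m) :
    DifferentiableAt 𝕜 (fun w => (A w)⁻¹ i j) z := by
  simp only [inv_def, Ring.inverse_eq_inv', Matrix.smul_apply, adjugate_apply, smul_eq_mul]
  refine ((differentiableAt_det hA).inv hdet).mul (differentiableAt_det fun k l => ?_)
  by_cases hk : k = j
  · subst hk; simp
  · simpa [updateRow_ne hk] using hA k l

end Calculus

theorem fderiv_zero_snd_of_homogeneous {E E' G : Type*} [NormedAddCommGroup E] [NormedSpace ℝ E]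
    [NormedAddCommGroup E'] [NormedSpace ℝ E'] [NormedAddCommGroup G] [NormedSpace ℝ G]
    {f : E × E' → G} {z : E × E'} {d : ℕ} (hf : DifferentiableAt ℝ f z)
    (hhom : ∀ t : ℝ, 0 < t → f (z.1, t • z.2) = t ^ d • f z) :
    fderiv ℝ f z (0, z.2) = (d : ℝ) • f z := by
  have hray : HasDerivAt (fun t : ℝ => (z.1, t • z.2)) (0, z.2) 1 := by
    simpa using (hasDerivAt_const (1 : ℝ) z.1).prodMk ((hasDerivAt_id (1 : ℝ)).smul_const z.2)
  have hleft : HasDerivAt (fun t : ℝ => f (z.1, t • z.2)) (fderiv ℝ f z (0, z.2)) 1 :=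
    HasFDerivAt.comp_hasDerivAt (1 : ℝ) (by simpa using hf.hasFDerivAt) hray
  have hright : HasDerivAt (fun t : ℝ => t ^ d • f z) ((d : ℝ) • f z) 1 := by
    simpa using (hasDerivAt_pow d (1 : ℝ)).smul_const (f z)
  refine hleft.unique (hright.congr_of_eventuallyEq ?_)
  filter_upwards [lt_mem_nhds one_pos] with t ht using hhom t ht

theorem fderiv_fderiv_apply_zero_snd {E E' G : Type*} [NormedAddCommGroup E] [NormedSpace ℝ E]
    [NormedAddCommGroup E'] [NormedSpace ℝ E'] [NormedAddCommGroup G] [NormedSpace ℝ G]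
    {f : E × E' → G} {z : E × E'} {c : ℝ} (hf : ContDiffAt ℝ 2 f z)
    (heuler : ∀ᶠ w in 𝓝 z, fderiv ℝ f w (0, w.2) = c • f w) (b : E') :
    fderiv ℝ (fun w => fderiv ℝ f w (0, b)) z (0, z.2) = (c - 1) • fderiv ℝ f z (0, b) := by
  have hradial : HasFDerivAt (fun w : E × E' => ((0 : E), w.2))
      ((0 : E × E' →L[ℝ] E).prod (.snd ℝ E E')) z :=
    (hasFDerivAt_const 0 z).prodMk hasFDerivAt_snd
  have h := fderiv_fderiv_apply hf hradial.differentiableAt (0, b)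
  rw [EventuallyEq.fderiv_eq heuler, fderiv_fun_const_smul (hf.differentiableAt two_ne_zero),
    hradial.fderiv] at h
  simp only [_root_.smul_apply, ContinuousLinearMap.prod_apply, _root_.zero_apply,
    ContinuousLinearMap.coe_snd'] at h
  rw [sub_smul, one_smul, h, add_sub_cancel_right]

theorem dotProduct_mulVec_comm_of_isSymm {R m : Type*} [CommSemiring R] [Fintype m]
    {M : Matrix m m R} (hM : M.IsSymm) (v w : m → R) : v ⬝ᵥ M *ᵥ w = w ⬝ᵥ M *ᵥ v := by
  rw [dotProduct_mulVec, ← mulVec_transpose, hM.eq, dotProduct_comm]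

theorem dotProduct_mulVec_sub_smul_self {R m : Type*} [CommRing R] [Fintype m] {M : Matrix m m R}
    (hM : M.IsSymm) {y d : m → R} (hyd : y ⬝ᵥ M *ᵥ d = 0) (c : R) :
    (d - c • y) ⬝ᵥ M *ᵥ (d - c • y) = d ⬝ᵥ M *ᵥ d + c ^ 2 * (y ⬝ᵥ M *ᵥ y) := by
  have hdy : d ⬝ᵥ M *ᵥ y = 0 := (dotProduct_mulVec_comm_of_isSymm hM d y).trans hyd
  simp only [mulVec_sub, mulVec_smul, sub_dotProduct, dotProduct_sub, smul_dotProduct,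
    dotProduct_smul, smul_eq_mul, hyd, hdy]
  ring

/-- The value at `z` of a tensor with two indices, as a matrix. -/
def matrixAt {n : ℕ} (T : Fin n → Fin n → Pt n → ℝ) (z : Pt n) : Matrix (Fin n) (Fin n) ℝ :=
  .of fun i j => T i j z

/-- The value at `z` of a tensor with one index (upper or lower), as a coordinate vector. -/
def vectorAt {n : ℕ} (V : Fin n → Pt n → ℝ) (z : Pt n) : Fin n → ℝ :=
  fun i => V i z

/-- The contraction `v^p C_{pij}` of the Cartan tensor with a vector `v`, as a matrix. -/
def cartanContraction {n : ℕ} (F : Pt n → ℝ) (v : Fin n → ℝ) (z : Pt n) :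
    Matrix (Fin n) (Fin n) ℝ :=
  .of fun i j => ∑ p, v p * CF F p i j z

/-- The vector field on the chart whose flow is the magnetic flow: `x' = y` and
`y' = F Y(y) - N(y)`. It is the operator `X` on scalars. -/
def magneticField {n : ℕ} (F : Pt n → ℝ) (Γ : Fin n → Fin n → Fin n → Pt n → ℝ)
    (Ω : Fin n → Fin n → (Fin n → ℝ) → ℝ) (ginv : Fin n → Fin n → Pt n → ℝ) (z : Pt n) : Pt n :=
  (z.2, F z • vectorAt (Yy Ω ginv) z - matrixAt (Nc Γ) z *ᵥ z.2)

section Coordinates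

variable {n : ℕ} {z : Pt n}

theorem fderiv_apply_eq_dotProduct (f : Pt n → ℝ) (z : Pt n) (a b : Fin n → ℝ) :
    fderiv ℝ f z (a, b) = a ⬝ᵥ vectorAt (pdx · f) z + b ⬝ᵥ vectorAt (pdy · f) z := by
  have hab : (a, b) = ∑ k, a k • ((Pi.single k 1, 0) : Pt n)
      + ∑ k, b k • ((0, Pi.single k 1) : Pt n) := by
    ext i <;> simp [Prod.fst_sum, Prod.snd_sum, Finset.sum_apply, Pi.single_apply]
  rw [hab, map_add, map_sum, map_sum]
  simp only [map_smul, smul_eq_mul]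
  rfl

theorem differentiableAt_vectorAt {V : Fin n → Pt n → ℝ}
    (hV : ∀ i, DifferentiableAt ℝ (V i) z) : DifferentiableAt ℝ (vectorAt V) z :=
  differentiableAt_pi.2 hV

theorem fderiv_vectorAt {V : Fin n → Pt n → ℝ} (hV : ∀ i, DifferentiableAt ℝ (V i) z)
    (v : Pt n) : fderiv ℝ (vectorAt V) z v = vectorAt (fun i w => fderiv ℝ (V i) w v) z := by
  rw [show vectorAt V = fun w i => V i w from rfl, fderiv_pi hV]
  rfl

theorem fderiv_matrixAt_mulVec {T : Fin n → Fin n → Pt n → ℝ} {a : Pt n → Fin n → ℝ}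
    (hT : ∀ i j, DifferentiableAt ℝ (T i j) z) (ha : DifferentiableAt ℝ a z) (v : Pt n) :
    fderiv ℝ (fun w => matrixAt T w *ᵥ a w) z v =
      matrixAt (fun i j w => fderiv ℝ (T i j) w v) z *ᵥ a z
        + matrixAt T z *ᵥ fderiv ℝ a z v := by
  have hrow := fun i => differentiableAt_vectorAt (hT i)
  have hrows := fun i => differentiableAt_dotProduct (hrow i) ha
  rw [show (fun w => matrixAt T w *ᵥ a w) = fun w i => vectorAt (T i) w ⬝ᵥ a w from rfl,
    fderiv_pi hrows]
  ext i
  rw [ContinuousLinearMap.pi_apply, fderiv_dotProduct (hrow i) ha, fderiv_vectorAt (hT i)]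
  rfl

theorem differentiableAt_matrixAt_mulVec {T : Fin n → Fin n → Pt n → ℝ} {a : Pt n → Fin n → ℝ}
    (hT : ∀ i j, DifferentiableAt ℝ (T i j) z) (ha : DifferentiableAt ℝ a z) :
    DifferentiableAt ℝ (fun w => matrixAt T w *ᵥ a w) z :=
  differentiableAt_pi.2 fun i => differentiableAt_dotProduct (differentiableAt_vectorAt (hT i)) ha

theorem differentiableAt_pdy {f : Pt n → ℝ} (hf : ContDiffAt ℝ 2 f z) (i : Fin n) :
    DifferentiableAt ℝ (pdy i f) z :=
  differentiableAt_fderiv_apply hf _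

theorem pdy_comm {f : Pt n → ℝ} (hf : ContDiffAt ℝ 2 f z) (i j : Fin n) :
    pdy i (pdy j f) z = pdy j (pdy i f) z := by
  have h := fderiv_fderiv_apply hf (differentiableAt_const ((0, Pi.single j 1) : Pt n))
    (0, Pi.single i 1)
  rw [fderiv_fun_const, Pi.zero_apply, _root_.zero_apply, map_zero, add_zero] at h
  exact h

theorem pdy_comp_fst {f : (Fin n → ℝ) → ℝ}
    (hf : DifferentiableAt ℝ (fun w : Pt n => f w.1) z) (l : Fin n) :
    pdy l (fun w => f w.1) z = 0 := by
  rw [pdy, ← hf.lineDeriv_eq_fderiv, lineDeriv]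
  simp

theorem iprod_eq_dotProduct_mulVec (F : Pt n → ℝ) (U V : Fin n → Pt n → ℝ) (z : Pt n) :
    iprod F U V z = vectorAt U z ⬝ᵥ matrixAt (gF F) z *ᵥ vectorAt V z := by
  simp only [iprod, dotProduct, mulVec, matrixAt, vectorAt, of_apply, Finset.mul_sum]
  exact Finset.sum_congr rfl fun i _ => Finset.sum_congr rfl fun j _ => by ring

end Coordinates

section Finsler

variable {n : ℕ} {F : Pt n → ℝ} {z : Pt n}

theorem contDiffAt_pdy_sq {k : ℕ∞} (hF : ContDiffAt ℝ (k + 1) F z) (j : Fin n) :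
    ContDiffAt ℝ k (pdy j fun w => F w ^ 2) z :=
  contDiffAt_fderiv_apply (hF.pow 2) _

theorem gF_comm (hF : ContDiffAt ℝ 2 F z) (i j : Fin n) : gF F i j z = gF F j i z := by
  simp only [gF, pdy_comm (hF.pow 2) i j]

theorem matrixAt_gF_isSymm (hF : ContDiffAt ℝ 2 F z) : (matrixAt (gF F) z).IsSymm :=
  Matrix.ext fun i j => gF_comm hF j i

theorem differentiableAt_gF (hF : ContDiffAt ℝ 3 F z) (i j : Fin n) :
    DifferentiableAt ℝ (gF F i j) z :=
  (differentiableAt_pdy (contDiffAt_pdy_sq (k := 2) hF j) i).const_mul _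

theorem fderiv_gF (F : Pt n → ℝ) (z : Pt n) (i j : Fin n) :
    fderiv ℝ (gF F i j) z = (1 / 2 : ℝ) • fderiv ℝ (pdy i (pdy j fun w => F w ^ 2)) z :=
  congrFun (fderiv_const_smul_field (1 / 2 : ℝ)) z

theorem pdy_gF (F : Pt n → ℝ) (z : Pt n) (p i j : Fin n) :
    pdy p (gF F i j) z = 2 * CF F p i j z := by
  rw [pdy, fderiv_gF, _root_.smul_apply, smul_eq_mul, CF, pdy]
  ring

theorem CF_comm_left (hF : ContDiffAt ℝ 3 F z) (i j k : Fin n) : CF F i j k z = CF F j i k z := by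
  simp only [CF, pdy_comm (contDiffAt_pdy_sq (k := 2) hF k) i j]

theorem CF_comm_right (hF : ContDiffAt ℝ 3 F z) (i j k : Fin n) :
    CF F i j k z = CF F i k j z := by
  have hg : gF F j k =ᶠ[𝓝 z] gF F k j :=
    (hF.eventually (by simp)).mono fun w hw => gF_comm (hw.of_le (by norm_num)) j k
  have h : pdy i (gF F j k) z = pdy i (gF F k j) z := by rw [pdy, pdy, hg.fderiv_eq]
  simpa only [pdy_gF, mul_right_inj' (two_ne_zero' ℝ)] using h

theorem cartanContraction_sub (F : Pt n → ℝ) (v w : Fin n → ℝ) (z : Pt n) :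
    cartanContraction F (v - w) z = cartanContraction F v z - cartanContraction F w z := by
  ext i j
  simp [cartanContraction, sub_mul]

theorem cartanContraction_smul (F : Pt n → ℝ) (c : ℝ) (v : Fin n → ℝ) (z : Pt n) :
    cartanContraction F (c • v) z = c • cartanContraction F v z := by
  ext i j
  simp [cartanContraction, mul_assoc, Finset.mul_sum]

theorem cartanContraction_isSymm (hF : ContDiffAt ℝ 3 F z) (v : Fin n → ℝ) :
    (cartanContraction F v z).IsSymm :=
  Matrix.ext fun i j => by simp only [cartanContraction, transpose_apply, of_apply,
    CF_comm_right hF _ j i]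

theorem cartanContraction_mulVec_comm (hF : ContDiffAt ℝ 3 F z) (v w : Fin n → ℝ) :
    cartanContraction F v z *ᵥ w = cartanContraction F w z *ᵥ v := by
  ext i
  simp only [cartanContraction, mulVec, dotProduct, of_apply, Finset.sum_mul]
  rw [Finset.sum_comm]
  refine Finset.sum_congr rfl fun p _ => Finset.sum_congr rfl fun q _ => ?_
  rw [CF_comm_left hF p i q, CF_comm_right hF i p q, CF_comm_left hF i q p]
  ring

theorem fderiv_gF_apply (F : Pt n → ℝ) (z : Pt n) (a b : Fin n → ℝ) (i j : Fin n) :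
    fderiv ℝ (gF F i j) z (a, b) =
      a ⬝ᵥ vectorAt (pdx · (gF F i j)) z + 2 * cartanContraction F b z i j := by
  rw [fderiv_apply_eq_dotProduct]
  simp only [cartanContraction, vectorAt, pdy_gF, dotProduct, of_apply, Finset.mul_sum,
    mul_left_comm]

section Homogeneous

theorem eventually_fderiv_sq_zero_snd (hF : ContDiffAt ℝ 1 F z)
    (hFhom : ∀ᶠ w in 𝓝 z, ∀ t : ℝ, 0 < t → F (w.1, t • w.2) = t * F w) :
    ∀ᶠ w in 𝓝 z, fderiv ℝ (fun w => F w ^ 2) w (0, w.2) = (2 : ℝ) • F w ^ 2 := by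
  filter_upwards [hFhom, hF.eventually (by simp)] with w hw hFw
  refine fderiv_zero_snd_of_homogeneous (d := 2) ((hFw.differentiableAt one_ne_zero).pow 2) ?_
  intro t ht
  rw [hw t ht, mul_pow, smul_eq_mul]

theorem eventually_fderiv_pdy_sq_zero_snd (hF : ContDiffAt ℝ 2 F z)
    (hFhom : ∀ᶠ w in 𝓝 z, ∀ t : ℝ, 0 < t → F (w.1, t • w.2) = t * F w) (j : Fin n) :
    ∀ᶠ w in 𝓝 z, fderiv ℝ (pdy j fun w => F w ^ 2) w (0, w.2) =
      (1 : ℝ) • pdy j (fun w => F w ^ 2) w := by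
  filter_upwards [(eventually_fderiv_sq_zero_snd (hF.of_le one_le_two) hFhom).eventually_nhds,
    hF.eventually (by simp)] with w heuler hFw
  exact (fderiv_fderiv_apply_zero_snd (hFw.pow 2) heuler (Pi.single j 1)).trans
    (by rw [pdy]; norm_num)

theorem dotProduct_vectorAt_pdy_self (hF : DifferentiableAt ℝ F z)
    (hFhom : ∀ t : ℝ, 0 < t → F (z.1, t • z.2) = t * F z) :
    z.2 ⬝ᵥ vectorAt (pdy · F) z = F z := by
  have h := fderiv_zero_snd_of_homogeneous (d := 1) hF (by simpa using hFhom)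
  rw [fderiv_apply_eq_dotProduct] at h
  simpa using h

theorem gF_mulVec_self (hF : ContDiffAt ℝ 2 F z)
    (hFhom : ∀ᶠ w in 𝓝 z, ∀ t : ℝ, 0 < t → F (w.1, t • w.2) = t * F w) :
    matrixAt (gF F) z *ᵥ z.2 = F z • vectorAt (pdy · F) z := by
  ext l
  have hF1 : DifferentiableAt ℝ F z := hF.differentiableAt two_ne_zero
  have heuler := (eventually_fderiv_pdy_sq_zero_snd hF hFhom l).self_of_nhds
  have hsq : pdy l (fun w => F w ^ 2) z = 2 * (F z * pdy l F z) := by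
    rw [pdy, fderiv_fun_pow 2 hF1]
    simp [pdy, mul_assoc]
  rw [fderiv_apply_eq_dotProduct, hsq] at heuler
  have hg : (matrixAt (gF F) z *ᵥ z.2) l =
      1 / 2 * (z.2 ⬝ᵥ vectorAt (pdy · (pdy l fun w => F w ^ 2)) z) := by
    simp only [mulVec, dotProduct, matrixAt, of_apply, vectorAt, Finset.mul_sum]
    refine Finset.sum_congr rfl fun k _ => ?_
    rw [gF_comm hF, gF]
    ring
  rw [zero_dotProduct, zero_add] at heuler
  rw [hg, heuler]
  simp [vectorAt]

theorem dotProduct_gF_mulVec_self (hF : ContDiffAt ℝ 2 F z)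
    (hFhom : ∀ᶠ w in 𝓝 z, ∀ t : ℝ, 0 < t → F (w.1, t • w.2) = t * F w) :
    z.2 ⬝ᵥ matrixAt (gF F) z *ᵥ z.2 = F z ^ 2 := by
  rw [gF_mulVec_self hF hFhom, dotProduct_smul, smul_eq_mul, sq,
    dotProduct_vectorAt_pdy_self (hF.differentiableAt two_ne_zero) hFhom.self_of_nhds]

theorem cartanContraction_self (hF : ContDiffAt ℝ 3 F z)
    (hFhom : ∀ᶠ w in 𝓝 z, ∀ t : ℝ, 0 < t → F (w.1, t • w.2) = t * F w) :
    cartanContraction F z.2 z = 0 := by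
  ext i j
  have h := fderiv_fderiv_apply_zero_snd (contDiffAt_pdy_sq (k := 2) hF j)
    (eventually_fderiv_pdy_sq_zero_snd (hF.of_le (by norm_num)) hFhom j) (Pi.single i 1)
  have hg : fderiv ℝ (gF F i j) z (0, z.2) = 0 := by
    rw [sub_self, zero_smul] at h
    rw [fderiv_gF, _root_.smul_apply]
    exact smul_eq_zero_of_right _ h
  simpa [fderiv_gF_apply] using hg

end Homogeneous

end Finsler

section MagneticField

variable {n : ℕ} {F : Pt n → ℝ} {Γ : Fin n → Fin n → Fin n → Pt n → ℝ}
  {Ω : Fin n → Fin n → (Fin n → ℝ) → ℝ} {ginv : Fin n → Fin n → Pt n → ℝ} {z : Pt n}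

theorem vectorAt_dmS (F : Pt n → ℝ) (Γ : Fin n → Fin n → Fin n → Pt n → ℝ)
    (Ω : Fin n → Fin n → (Fin n → ℝ) → ℝ) (ginv : Fin n → Fin n → Pt n → ℝ) (u : Pt n → ℝ)
    (z : Pt n) :
    vectorAt (dmS F Γ Ω ginv · u) z = vectorAt (pdx · u) z
      - vectorAt (pdy · u) z ᵥ* matrixAt (Nc Γ) z
      + F z • (vectorAt (pdy · u) z ᵥ* matrixAt (Yl Ω ginv) z) := by
  ext k
  simp [vectorAt, dmS, dhS, vecMul, dotProduct, matrixAt, mul_comm]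

theorem vectorAt_Yy (Ω : Fin n → Fin n → (Fin n → ℝ) → ℝ) (ginv : Fin n → Fin n → Pt n → ℝ)
    (z : Pt n) : vectorAt (Yy Ω ginv) z = matrixAt (Yl Ω ginv) z *ᵥ z.2 :=
  rfl

theorem Xs_eq_fderiv (F : Pt n → ℝ) (Γ : Fin n → Fin n → Fin n → Pt n → ℝ)
    (Ω : Fin n → Fin n → (Fin n → ℝ) → ℝ) (ginv : Fin n → Fin n → Pt n → ℝ) (u : Pt n → ℝ)
    (z : Pt n) : Xs F Γ Ω ginv u z = fderiv ℝ u z (magneticField F Γ Ω ginv z) := by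
  have hXs : Xs F Γ Ω ginv u z = z.2 ⬝ᵥ vectorAt (dmS F Γ Ω ginv · u) z := rfl
  rw [hXs, vectorAt_dmS, magneticField, fderiv_apply_eq_dotProduct, vectorAt_Yy]
  simp only [dotProduct_add, dotProduct_sub, dotProduct_smul, sub_dotProduct, smul_dotProduct]
  simp only [dotProduct_comm z.2 (_ ᵥ* _), ← dotProduct_mulVec,
    dotProduct_comm (_ *ᵥ z.2) (vectorAt (pdy · u) z)]
  ring

theorem vectorAt_XVec (hΓsym : ∀ i j k, Γ i j k z = Γ i k j z) (V : Fin n → Pt n → ℝ) :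
    vectorAt (XVec F Γ Ω ginv V) z =
      vectorAt (fun i w => fderiv ℝ (V i) w (magneticField F Γ Ω ginv z)) z
        + matrixAt (Nc Γ) z *ᵥ vectorAt V z := by
  ext i
  have hΓ : ∑ k, z.2 k * ∑ p, Γ i k p z * V p z = ∑ p, Nc Γ i p z * V p z := by
    simp only [Nc, Finset.mul_sum, Finset.sum_mul]
    rw [Finset.sum_comm]
    refine Finset.sum_congr rfl fun p _ => Finset.sum_congr rfl fun k _ => ?_
    rw [hΓsym i k p]
    ring
  have hsplit : XVec F Γ Ω ginv V i z
      = Xs F Γ Ω ginv (V i) z + ∑ k, z.2 k * ∑ p, Γ i k p z * V p z := by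
    simp only [XVec, Xs, dmVec, dmS, dhS, ← Finset.sum_add_distrib]
    exact Finset.sum_congr rfl fun k _ => by ring
  rw [vectorAt, hsplit, hΓ, Xs_eq_fderiv]
  rfl

theorem dotProduct_vectorAt_pdx_gF (hF : ContDiffAt ℝ 3 F z)
    (hcompat : ∀ j l m, pdx m (gF F j l) z =
      ∑ k, (gF F k l z * Γ k j m z + gF F k j z * Γ k l m z + 2 * CF F j k l z * Nc Γ k m z))
    (i j : Fin n) :
    z.2 ⬝ᵥ vectorAt (pdx · (gF F i j)) z =
      ((matrixAt (Nc Γ) z)ᵀ * matrixAt (gF F) z + matrixAt (gF F) z * matrixAt (Nc Γ) z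
        + (2 : ℝ) • cartanContraction F (matrixAt (Nc Γ) z *ᵥ z.2) z) i j := by
  have hNc : ∀ a b, ∑ m, z.2 m * Γ a b m z = Nc Γ a b z := fun a b =>
    Finset.sum_congr rfl fun m _ => mul_comm _ _
  have hterm : ∀ k, ∑ m, z.2 m * (gF F k j z * Γ k i m z + gF F k i z * Γ k j m z
        + 2 * CF F i k j z * Nc Γ k m z) =
      Nc Γ k i z * gF F k j z + gF F i k z * Nc Γ k j z
        + 2 * ((∑ m, Nc Γ k m z * z.2 m) * CF F k i j z) := by
    intro k
    rw [← hNc k i, ← hNc k j, gF_comm (hF.of_le (by norm_num)) i k, CF_comm_left hF k i j]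
    simp only [Finset.sum_mul, Finset.mul_sum, ← Finset.sum_add_distrib]
    exact Finset.sum_congr rfl fun m _ => by ring
  simp only [dotProduct, vectorAt, hcompat, Finset.mul_sum]
  rw [Finset.sum_comm]
  simp only [← Finset.mul_sum, hterm, Finset.sum_add_distrib]
  simp [mul_apply, cartanContraction, matrixAt, mulVec, dotProduct]

theorem matrixAt_fderiv_gF_magneticField (hF : ContDiffAt ℝ 3 F z)
    (hcompat : ∀ j l m, pdx m (gF F j l) z =
      ∑ k, (gF F k l z * Γ k j m z + gF F k j z * Γ k l m z + 2 * CF F j k l z * Nc Γ k m z)) :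
    matrixAt (fun i j w => fderiv ℝ (gF F i j) w (magneticField F Γ Ω ginv z)) z =
      (matrixAt (Nc Γ) z)ᵀ * matrixAt (gF F) z + matrixAt (gF F) z * matrixAt (Nc Γ) z
        + (2 * F z) • cartanContraction F (vectorAt (Yy Ω ginv) z) z := by
  ext i j
  rw [matrixAt, of_apply, magneticField, fderiv_gF_apply, dotProduct_vectorAt_pdx_gF hF hcompat]
  simp only [cartanContraction_sub, cartanContraction_smul, Matrix.add_apply, Matrix.sub_apply,
    Matrix.smul_apply, smul_eq_mul]
  ring

theorem gF_mulVec_XVec (hF : ContDiffAt ℝ 3 F z) (hΓsym : ∀ i j k, Γ i j k z = Γ i k j z)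
    (hcompat : ∀ j l m, pdx m (gF F j l) z =
      ∑ k, (gF F k l z * Γ k j m z + gF F k j z * Γ k l m z + 2 * CF F j k l z * Nc Γ k m z))
    {V : Fin n → Pt n → ℝ} (hV : ∀ i, DifferentiableAt ℝ (V i) z) :
    matrixAt (gF F) z *ᵥ vectorAt (XVec F Γ Ω ginv V) z =
      fderiv ℝ (fun w => matrixAt (gF F) w *ᵥ vectorAt V w) z (magneticField F Γ Ω ginv z)
        - (matrixAt (gF F) z *ᵥ vectorAt V z) ᵥ* matrixAt (Nc Γ) z
        - (2 * F z) • (cartanContraction F (vectorAt (Yy Ω ginv) z) z *ᵥ vectorAt V z) := by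
  rw [fderiv_matrixAt_mulVec (differentiableAt_gF hF) (differentiableAt_vectorAt hV),
    fderiv_vectorAt hV, matrixAt_fderiv_gF_magneticField hF hcompat, vectorAt_XVec hΓsym,
    ← mulVec_transpose]
  simp only [add_mulVec, mulVec_add, mulVec_mulVec, smul_mulVec]
  abel

section Inverse

theorem differentiableAt_ginv (hF : ContDiffAt ℝ 3 F z)
    (hginv : ∀ᶠ w in 𝓝 z, matrixAt (gF F) w * matrixAt ginv w = 1) (i j : Fin n) :
    DifferentiableAt ℝ (ginv i j) z := by
  have hinv : ginv i j =ᶠ[𝓝 z] fun w => (matrixAt (gF F) w)⁻¹ i j :=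
    hginv.mono fun w hw => (congrFun₂ (inv_eq_right_inv hw) i j).symm
  exact (differentiableAt_matrix_inv (differentiableAt_gF hF)
    (det_ne_zero_of_right_inverse hginv.self_of_nhds) i j).congr_of_eventuallyEq hinv

theorem matrixAt_ginv_isSymm (hF : ContDiffAt ℝ 2 F z)
    (hginv : matrixAt (gF F) z * matrixAt ginv z = 1) : (matrixAt ginv z).IsSymm := by
  rw [← inv_eq_right_inv hginv]
  exact (matrixAt_gF_isSymm hF).inv

theorem vectorAt_nablaV (ginv : Fin n → Fin n → Pt n → ℝ) (u : Pt n → ℝ) (z : Pt n) :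
    vectorAt (nablaV ginv u) z = matrixAt ginv z *ᵥ vectorAt (pdy · u) z :=
  rfl

theorem vectorAt_nablaM (F : Pt n → ℝ) (Γ : Fin n → Fin n → Fin n → Pt n → ℝ)
    (Ω : Fin n → Fin n → (Fin n → ℝ) → ℝ) (ginv : Fin n → Fin n → Pt n → ℝ) (u : Pt n → ℝ)
    (z : Pt n) :
    vectorAt (nablaM F Γ Ω ginv u) z = matrixAt ginv z *ᵥ vectorAt (dmS F Γ Ω ginv · u) z :=
  rfl

theorem differentiableAt_nablaV (hginv : ∀ i j, DifferentiableAt ℝ (ginv i j) z) {u : Pt n → ℝ}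
    (hu : ContDiffAt ℝ 2 u z) (i : Fin n) : DifferentiableAt ℝ (nablaV ginv u i) z :=
  differentiableAt_dotProduct (differentiableAt_vectorAt (hginv i))
    (differentiableAt_vectorAt (differentiableAt_pdy hu))

end Inverse

section LorentzForce

theorem matrixAt_Yl (Ω : Fin n → Fin n → (Fin n → ℝ) → ℝ) (ginv : Fin n → Fin n → Pt n → ℝ)
    (z : Pt n) :
    matrixAt (Yl Ω ginv) z = matrixAt ginv z * (matrixAt (fun i j w => Ω i j w.1) z)ᵀ := by
  ext i j
  simp [matrixAt, Yl, mul_apply, mul_comm]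

theorem gF_mulVec_Yy (hginv : matrixAt (gF F) z * matrixAt ginv z = 1) :
    matrixAt (gF F) z *ᵥ vectorAt (Yy Ω ginv) z =
      matrixAt (fun i j w => Ω j i w.1) z *ᵥ z.2 := by
  rw [vectorAt_Yy, matrixAt_Yl, mulVec_mulVec, ← Matrix.mul_assoc, hginv, Matrix.one_mul]
  rfl

theorem differentiableAt_Yy (hginv : ∀ i j, DifferentiableAt ℝ (ginv i j) z)
    (hΩ : ∀ j k, DifferentiableAt ℝ (fun w : Pt n => Ω j k w.1) z) :
    ∀ i, DifferentiableAt ℝ (Yy Ω ginv i) z := by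
  have hYl : ∀ i j, DifferentiableAt ℝ (Yl Ω ginv i j) z := fun i j =>
    differentiableAt_dotProduct (differentiableAt_vectorAt (V := fun k w => Ω j k w.1) (hΩ j))
      (differentiableAt_vectorAt (hginv i))
  exact fun i =>
    differentiableAt_dotProduct (differentiableAt_vectorAt (hYl i)) differentiableAt_snd

theorem gF_mulVec_fderiv_Yy (hF : ContDiffAt ℝ 3 F z)
    (hginv : ∀ᶠ w in 𝓝 z, matrixAt (gF F) w * matrixAt ginv w = 1)
    (hΩ : ∀ j k, DifferentiableAt ℝ (fun w : Pt n => Ω j k w.1) z) (l : Fin n) :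
    matrixAt (gF F) z *ᵥ fderiv ℝ (vectorAt (Yy Ω ginv)) z (0, Pi.single l 1) =
      (fun i => Ω l i z.1)
        - (2 : ℝ) • (cartanContraction F (vectorAt (Yy Ω ginv) z) z *ᵥ Pi.single l 1) := by
  have hY := differentiableAt_vectorAt (differentiableAt_Yy (differentiableAt_ginv hF hginv) hΩ)
  have hlower : (fun w => matrixAt (gF F) w *ᵥ vectorAt (Yy Ω ginv) w) =ᶠ[𝓝 z]
      fun w => matrixAt (fun i j w => Ω j i w.1) w *ᵥ w.2 :=
    hginv.mono fun w hw => gF_mulVec_Yy hw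
  have h := DFunLike.congr_fun (hlower.fderiv_eq (𝕜 := ℝ)) ((0, Pi.single l 1) : Pt n)
  have hdg : matrixAt (fun i j w => fderiv ℝ (gF F i j) w (0, Pi.single l 1)) z =
      (2 : ℝ) • cartanContraction F (Pi.single l 1) z := by
    ext i j
    simp [matrixAt, fderiv_gF_apply]
  have hdΩ : matrixAt (fun i j w => fderiv ℝ (fun w : Pt n => Ω j i w.1) w
      (0, Pi.single l 1)) z = 0 := Matrix.ext fun i j => pdy_comp_fst (hΩ j i) l
  rw [fderiv_matrixAt_mulVec (differentiableAt_gF hF) hY,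
    fderiv_matrixAt_mulVec (fun i j => hΩ j i) differentiableAt_snd, hdg, hdΩ, zero_mulVec,
    zero_add, fderiv_snd, ContinuousLinearMap.coe_snd', mulVec_single_one, smul_mulVec,
    cartanContraction_mulVec_comm hF] at h
  exact eq_sub_of_add_eq' h

theorem dotProduct_fderiv_Yy (hF : ContDiffAt ℝ 3 F z)
    (hginv : ∀ᶠ w in 𝓝 z, matrixAt (gF F) w * matrixAt ginv w = 1)
    (hΩ : ∀ j k, DifferentiableAt ℝ (fun w : Pt n => Ω j k w.1) z) (a : Fin n → ℝ) (l : Fin n) :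
    a ⬝ᵥ fderiv ℝ (vectorAt (Yy Ω ginv)) z (0, Pi.single l 1) =
      (a ᵥ* matrixAt (Yl Ω ginv) z
        - (2 : ℝ) • (cartanContraction F (vectorAt (Yy Ω ginv) z) z
          *ᵥ matrixAt ginv z *ᵥ a)) l := by
  have hginvz := hginv.self_of_nhds
  have hF2 := hF.of_le (m := 2) (by norm_num)
  have hraise : a ᵥ* matrixAt ginv z = matrixAt ginv z *ᵥ a := by
    rw [← mulVec_transpose, (matrixAt_ginv_isSymm hF2 hginvz).eq]
  have ha : a = (matrixAt ginv z *ᵥ a) ᵥ* matrixAt (gF F) z := by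
    rw [← mulVec_transpose, (matrixAt_gF_isSymm hF2).eq, mulVec_mulVec, hginvz, one_mulVec]
  conv_lhs => rw [ha]
  rw [← dotProduct_mulVec, gF_mulVec_fderiv_Yy hF hginv hΩ, matrixAt_Yl, ← vecMul_vecMul, hraise,
    vecMul_transpose, dotProduct_sub, dotProduct_smul,
    dotProduct_mulVec_comm_of_isSymm (cartanContraction_isSymm hF _), single_one_dotProduct,
    dotProduct_comm]
  rfl

end LorentzForce

section Spray

theorem differentiableAt_Nc (hΓ : ∀ i j k, DifferentiableAt ℝ (Γ i j k) z) (i j : Fin n) :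
    DifferentiableAt ℝ (Nc Γ i j) z :=
  differentiableAt_dotProduct (differentiableAt_vectorAt (hΓ i j)) differentiableAt_snd

theorem pdy_Nc (hΓ : ∀ i j k, DifferentiableAt ℝ (Γ i j k) z) (i j l : Fin n) :
    pdy l (Nc Γ i j) z = ∑ k, z.2 k * pdy l (Γ i j k) z + Γ i j l z := by
  have h := fderiv_dotProduct (differentiableAt_vectorAt (hΓ i j)) differentiableAt_snd
    ((0, Pi.single l 1) : Pt n)
  rw [fderiv_vectorAt (hΓ i j), fderiv_snd, ContinuousLinearMap.coe_snd', dotProduct_single_one,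
    dotProduct_comm] at h
  exact h

theorem fderiv_Nc_mulVec_snd (hΓ : ∀ i j k, DifferentiableAt ℝ (Γ i j k) z)
    (hΓsym : ∀ i j k, Γ i j k z = Γ i k j z)
    (hspray : ∀ i l, ∑ j, ∑ k, z.2 j * z.2 k * pdy l (Γ i j k) z = 0) (l : Fin n) :
    fderiv ℝ (fun w => matrixAt (Nc Γ) w *ᵥ w.2) z (0, Pi.single l 1) =
      (2 : ℝ) • (matrixAt (Nc Γ) z *ᵥ Pi.single l 1) := by
  rw [fderiv_matrixAt_mulVec (differentiableAt_Nc hΓ) differentiableAt_snd, fderiv_snd,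
    ContinuousLinearMap.coe_snd', two_smul, add_left_inj, mulVec_single_one]
  ext i
  calc ∑ j, pdy l (Nc Γ i j) z * z.2 j
    _ = ∑ j, ∑ k, z.2 j * z.2 k * pdy l (Γ i j k) z + ∑ j, Γ i j l z * z.2 j := by
      rw [← Finset.sum_add_distrib]
      refine Finset.sum_congr rfl fun j _ => ?_
      rw [pdy_Nc hΓ, add_mul, Finset.sum_mul]
      exact congrArg (· + _) (Finset.sum_congr rfl fun k _ => by ring)
    _ = ∑ j, Γ i l j z * z.2 j := by simp only [hspray, zero_add, hΓsym i l]

end Spray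

section Commutator

theorem differentiableAt_magneticField (hF : DifferentiableAt ℝ F z)
    (hY : ∀ i, DifferentiableAt ℝ (Yy Ω ginv i) z)
    (hΓ : ∀ i j k, DifferentiableAt ℝ (Γ i j k) z) :
    DifferentiableAt ℝ (magneticField F Γ Ω ginv) z :=
  differentiableAt_snd.prodMk ((hF.smul (differentiableAt_vectorAt hY)).sub
    (differentiableAt_matrixAt_mulVec (differentiableAt_Nc hΓ) differentiableAt_snd))

theorem fderiv_magneticField (hF : DifferentiableAt ℝ F z)
    (hY : ∀ i, DifferentiableAt ℝ (Yy Ω ginv i) z)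
    (hΓ : ∀ i j k, DifferentiableAt ℝ (Γ i j k) z) (hΓsym : ∀ i j k, Γ i j k z = Γ i k j z)
    (hspray : ∀ i l, ∑ j, ∑ k, z.2 j * z.2 k * pdy l (Γ i j k) z = 0) (l : Fin n) :
    fderiv ℝ (magneticField F Γ Ω ginv) z (0, Pi.single l 1) =
      (Pi.single l 1, F z • fderiv ℝ (vectorAt (Yy Ω ginv)) z (0, Pi.single l 1)
        + pdy l F z • vectorAt (Yy Ω ginv) z
        - (2 : ℝ) • (matrixAt (Nc Γ) z *ᵥ Pi.single l 1)) := by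
  have hforce := hF.fun_smul (differentiableAt_vectorAt hY)
  have hspray' := differentiableAt_matrixAt_mulVec (differentiableAt_Nc hΓ) differentiableAt_snd
  rw [show magneticField F Γ Ω ginv = fun w => (w.2, F w • vectorAt (Yy Ω ginv) w
      - matrixAt (Nc Γ) w *ᵥ w.2) from rfl,
    differentiableAt_snd.fderiv_prodMk (hforce.fun_sub hspray'), ContinuousLinearMap.prod_apply,
    fderiv_fun_sub hforce hspray', _root_.sub_apply, fderiv_Nc_mulVec_snd hΓ hΓsym hspray,
    fderiv_fun_smul hF (differentiableAt_vectorAt hY)]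
  simp [fderiv_snd, pdy]

theorem pdy_Xs {u : Pt n → ℝ} (hu : ContDiffAt ℝ 2 u z)
    (hS : DifferentiableAt ℝ (magneticField F Γ Ω ginv) z) (l : Fin n) :
    pdy l (Xs F Γ Ω ginv u) z = fderiv ℝ (pdy l u) z (magneticField F Γ Ω ginv z)
      + fderiv ℝ u z (fderiv ℝ (magneticField F Γ Ω ginv) z (0, Pi.single l 1)) := by
  rw [pdy, funext (Xs_eq_fderiv F Γ Ω ginv u)]
  exact fderiv_fderiv_apply hu hS _

theorem vectorAt_pdy_Xs (hF : ContDiffAt ℝ 3 F z)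
    (hginv : ∀ᶠ w in 𝓝 z, matrixAt (gF F) w * matrixAt ginv w = 1)
    (hΓ : ∀ i j k, DifferentiableAt ℝ (Γ i j k) z) (hΓsym : ∀ i j k, Γ i j k z = Γ i k j z)
    (hspray : ∀ i l, ∑ j, ∑ k, z.2 j * z.2 k * pdy l (Γ i j k) z = 0)
    (hΩ : ∀ j k, DifferentiableAt ℝ (fun w : Pt n => Ω j k w.1) z) {u : Pt n → ℝ}
    (hu : ContDiffAt ℝ 2 u z) :
    vectorAt (pdy · (Xs F Γ Ω ginv u)) z =
      fderiv ℝ (vectorAt (pdy · u)) z (magneticField F Γ Ω ginv z)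
        + vectorAt (dmS F Γ Ω ginv · u) z - vectorAt (pdy · u) z ᵥ* matrixAt (Nc Γ) z
        + (vectorAt (Yy Ω ginv) z ⬝ᵥ vectorAt (pdy · u) z) • vectorAt (pdy · F) z
        - (2 * F z) • (cartanContraction F (vectorAt (Yy Ω ginv) z) z
          *ᵥ vectorAt (nablaV ginv u) z) := by
  have hF1 : DifferentiableAt ℝ F z := hF.differentiableAt three_ne_zero
  have hY := differentiableAt_Yy (differentiableAt_ginv hF hginv) hΩ
  ext l
  have hcomm := pdy_Xs hu (differentiableAt_magneticField hF1 hY hΓ) l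
  rw [fderiv_magneticField hF1 hY hΓ hΓsym hspray, fderiv_apply_eq_dotProduct u] at hcomm
  simp only [sub_dotProduct, add_dotProduct, smul_dotProduct, single_one_dotProduct, smul_eq_mul]
    at hcomm
  rw [dotProduct_comm _ (vectorAt (pdy · u) z), dotProduct_fderiv_Yy hF hginv hΩ,
    dotProduct_comm (_ *ᵥ _) (vectorAt (pdy · u) z), dotProduct_mulVec, dotProduct_single_one]
    at hcomm
  rw [vectorAt_dmS, fderiv_vectorAt (differentiableAt_pdy hu), vectorAt_nablaV,
    show vectorAt (pdy · (Xs F Γ Ω ginv u)) z l = _ from hcomm]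
  simp only [Pi.add_apply, Pi.sub_apply, Pi.smul_apply, smul_eq_mul, vectorAt]
  ring

end Commutator

section Pythagoras

variable {u : Pt n → ℝ}

theorem gF_mulVec_nablaV (hginv : matrixAt (gF F) z * matrixAt ginv z = 1) (u : Pt n → ℝ) :
    matrixAt (gF F) z *ᵥ vectorAt (nablaV ginv u) z = vectorAt (pdy · u) z := by
  rw [vectorAt_nablaV, mulVec_mulVec, hginv, one_mulVec]

theorem gF_mulVec_nablaM (hginv : matrixAt (gF F) z * matrixAt ginv z = 1) (u : Pt n → ℝ) :
    matrixAt (gF F) z *ᵥ vectorAt (nablaM F Γ Ω ginv u) z = vectorAt (dmS F Γ Ω ginv · u) z := by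
  rw [vectorAt_nablaM, mulVec_mulVec, hginv, one_mulVec]

theorem gF_mulVec_XVec_nablaV (hF : ContDiffAt ℝ 3 F z)
    (hginv : ∀ᶠ w in 𝓝 z, matrixAt (gF F) w * matrixAt ginv w = 1)
    (hΓsym : ∀ i j k, Γ i j k z = Γ i k j z)
    (hcompat : ∀ j l m, pdx m (gF F j l) z =
      ∑ k, (gF F k l z * Γ k j m z + gF F k j z * Γ k l m z + 2 * CF F j k l z * Nc Γ k m z))
    (hu : ContDiffAt ℝ 2 u z) :
    matrixAt (gF F) z *ᵥ vectorAt (XVec F Γ Ω ginv (nablaV ginv u)) z =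
      fderiv ℝ (vectorAt (pdy · u)) z (magneticField F Γ Ω ginv z)
        - vectorAt (pdy · u) z ᵥ* matrixAt (Nc Γ) z
        - (2 * F z) • (cartanContraction F (vectorAt (Yy Ω ginv) z) z
          *ᵥ vectorAt (nablaV ginv u) z) := by
  have hlower : (fun w => matrixAt (gF F) w *ᵥ vectorAt (nablaV ginv u) w) =ᶠ[𝓝 z]
      vectorAt (pdy · u) := hginv.mono fun w hw => gF_mulVec_nablaV hw u
  rw [gF_mulVec_XVec hF hΓsym hcompat (differentiableAt_nablaV (differentiableAt_ginv hF hginv) hu),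
    hlower.fderiv_eq, gF_mulVec_nablaV hginv.self_of_nhds]

theorem gF_mulVec_XVec_nablaV_eq_sub (hF : ContDiffAt ℝ 3 F z)
    (hginv : ∀ᶠ w in 𝓝 z, matrixAt (gF F) w * matrixAt ginv w = 1)
    (hΓ : ∀ i j k, DifferentiableAt ℝ (Γ i j k) z) (hΓsym : ∀ i j k, Γ i j k z = Γ i k j z)
    (hcompat : ∀ j l m, pdx m (gF F j l) z =
      ∑ k, (gF F k l z * Γ k j m z + gF F k j z * Γ k l m z + 2 * CF F j k l z * Nc Γ k m z))
    (hspray : ∀ i l, ∑ j, ∑ k, z.2 j * z.2 k * pdy l (Γ i j k) z = 0)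
    (hΩ : ∀ j k, DifferentiableAt ℝ (fun w : Pt n => Ω j k w.1) z) (hu : ContDiffAt ℝ 2 u z) :
    matrixAt (gF F) z *ᵥ vectorAt (XVec F Γ Ω ginv (nablaV ginv u)) z =
      matrixAt (gF F) z *ᵥ
          (vectorAt (nablaV ginv (Xs F Γ Ω ginv u)) z - vectorAt (nablaM F Γ Ω ginv u) z)
        - (vectorAt (Yy Ω ginv) z ⬝ᵥ vectorAt (pdy · u) z) • vectorAt (pdy · F) z := by
  have hginvz := hginv.self_of_nhds
  rw [gF_mulVec_XVec_nablaV hF hginv hΓsym hcompat hu, mulVec_sub, gF_mulVec_nablaV hginvz,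
    gF_mulVec_nablaM hginvz, vectorAt_pdy_Xs hF hginv hΓ hΓsym hspray hΩ hu]
  abel

theorem dotProduct_fderiv_vectorAt_pdy (hu : ContDiffAt ℝ 2 u z)
    (huhom : ∀ᶠ w in 𝓝 z, ∀ t : ℝ, 0 < t → u (w.1, t • w.2) = u w) (v : Pt n) :
    z.2 ⬝ᵥ fderiv ℝ (vectorAt (pdy · u)) z v = -(v.2 ⬝ᵥ vectorAt (pdy · u) z) := by
  have heuler : (fun w : Pt n => w.2 ⬝ᵥ vectorAt (pdy · u) w) =ᶠ[𝓝 z] fun _ => 0 := by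
    filter_upwards [huhom, hu.eventually (by simp)] with w hw hwu
    have h := fderiv_zero_snd_of_homogeneous (d := 0) (hwu.differentiableAt two_ne_zero)
      (by simpa using hw)
    simpa [fderiv_apply_eq_dotProduct] using h
  have h := fderiv_dotProduct differentiableAt_snd
    (differentiableAt_vectorAt (differentiableAt_pdy hu)) v
  rw [heuler.fderiv_eq, fderiv_fun_const, fderiv_snd] at h
  exact eq_neg_of_add_eq_zero_right h.symm

theorem dotProduct_gF_mulVec_XVec_nablaV (hF : ContDiffAt ℝ 3 F z)
    (hFhom : ∀ᶠ w in 𝓝 z, ∀ t : ℝ, 0 < t → F (w.1, t • w.2) = t * F w)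
    (hginv : ∀ᶠ w in 𝓝 z, matrixAt (gF F) w * matrixAt ginv w = 1)
    (hΓsym : ∀ i j k, Γ i j k z = Γ i k j z)
    (hcompat : ∀ j l m, pdx m (gF F j l) z =
      ∑ k, (gF F k l z * Γ k j m z + gF F k j z * Γ k l m z + 2 * CF F j k l z * Nc Γ k m z))
    (hu : ContDiffAt ℝ 2 u z)
    (huhom : ∀ᶠ w in 𝓝 z, ∀ t : ℝ, 0 < t → u (w.1, t • w.2) = u w) :
    z.2 ⬝ᵥ matrixAt (gF F) z *ᵥ vectorAt (XVec F Γ Ω ginv (nablaV ginv u)) z =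
      -(F z * (vectorAt (Yy Ω ginv) z ⬝ᵥ vectorAt (pdy · u) z)) := by
  have hcartan : z.2 ⬝ᵥ cartanContraction F (vectorAt (Yy Ω ginv) z) z
      *ᵥ vectorAt (nablaV ginv u) z = 0 := by
    rw [dotProduct_mulVec_comm_of_isSymm (cartanContraction_isSymm hF _),
      cartanContraction_mulVec_comm hF, cartanContraction_self hF hFhom, zero_mulVec,
      dotProduct_zero]
  have hN : z.2 ⬝ᵥ vectorAt (pdy · u) z ᵥ* matrixAt (Nc Γ) z =
      matrixAt (Nc Γ) z *ᵥ z.2 ⬝ᵥ vectorAt (pdy · u) z := by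
    rw [dotProduct_comm, ← dotProduct_mulVec, dotProduct_comm]
  rw [gF_mulVec_XVec_nablaV hF hginv hΓsym hcompat hu, dotProduct_sub, dotProduct_sub,
    dotProduct_smul, hcartan, hN, dotProduct_fderiv_vectorAt_pdy hu huhom, magneticField,
    sub_dotProduct, smul_dotProduct]
  simp only [smul_eq_mul]
  ring

theorem stmt_13_general (hF : ContDiffAt ℝ 3 F z) (hFz : F z ≠ 0)
    (hFhom : ∀ᶠ w in 𝓝 z, ∀ t : ℝ, 0 < t → F (w.1, t • w.2) = t * F w)
    (hginv : ∀ᶠ w in 𝓝 z, ∀ i j, ∑ k, gF F i k w * ginv k j w = if i = j then (1 : ℝ) else 0)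
    (hΓ : ∀ i j k, DifferentiableAt ℝ (Γ i j k) z) (hΓsym : ∀ i j k, Γ i j k z = Γ i k j z)
    (hcompat : ∀ j l m, pdx m (gF F j l) z =
      ∑ k, (gF F k l z * Γ k j m z + gF F k j z * Γ k l m z + 2 * CF F j k l z * Nc Γ k m z))
    (hspray : ∀ i l, ∑ j, ∑ k, z.2 j * z.2 k * pdy l (Γ i j k) z = 0)
    (hΩ : ∀ j k, DifferentiableAt ℝ (fun w : Pt n => Ω j k w.1) z) (hu : ContDiffAt ℝ 2 u z)
    (huhom : ∀ᶠ w in 𝓝 z, ∀ t : ℝ, 0 < t → u (w.1, t • w.2) = u w) :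
    iprod F (XVec F Γ Ω ginv (nablaV ginv u)) (XVec F Γ Ω ginv (nablaV ginv u)) z
      = iprod F (nablaV ginv (Xs F Γ Ω ginv u)) (nablaV ginv (Xs F Γ Ω ginv u)) z
        + iprod F (nablaM F Γ Ω ginv u) (nablaM F Γ Ω ginv u) z
        - 2 * iprod F (nablaM F Γ Ω ginv u) (nablaV ginv (Xs F Γ Ω ginv u)) z
        + iprod F (Yy Ω ginv) (nablaV ginv u) z ^ 2 := by
  have hF2 : ContDiffAt ℝ 2 F z := hF.of_le (by norm_num)
  have hginvM : ∀ᶠ w in 𝓝 z, matrixAt (gF F) w * matrixAt ginv w = 1 :=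
    hginv.mono fun w hw => Matrix.ext fun i j => by
      simpa only [mul_apply, matrixAt, of_apply, one_apply] using hw i j
  have hginvz := hginvM.self_of_nhds
  have hsymm := matrixAt_gF_isSymm hF2
  set P := vectorAt (nablaV ginv (Xs F Γ Ω ginv u)) z
  set R := vectorAt (nablaM F Γ Ω ginv u) z
  set a := vectorAt (Yy Ω ginv) z ⬝ᵥ vectorAt (pdy · u) z
  have hlower : matrixAt (gF F) z *ᵥ vectorAt (XVec F Γ Ω ginv (nablaV ginv u)) z =
      matrixAt (gF F) z *ᵥ (P - R) - a • vectorAt (pdy · F) z :=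
    gF_mulVec_XVec_nablaV_eq_sub hF hginvM hΓ hΓsym hcompat hspray hΩ hu
  have hXV : vectorAt (XVec F Γ Ω ginv (nablaV ginv u)) z = P - R - (a / F z) • z.2 := by
    refine mulVec_injective_of_isUnit (.of_mul_eq_one _ hginvz) ?_
    rw [hlower, mulVec_sub _ (P - R), mulVec_smul, gF_mulVec_self hF2 hFhom, smul_smul,
      div_mul_cancel₀ a hFz]
  have horth : z.2 ⬝ᵥ matrixAt (gF F) z *ᵥ (P - R) = 0 := by
    have h := dotProduct_gF_mulVec_XVec_nablaV (Ω := Ω) hF hFhom hginvM hΓsym hcompat hu huhom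
    rw [hlower, dotProduct_sub, dotProduct_smul, smul_eq_mul, dotProduct_vectorAt_pdy_self
      (hF2.differentiableAt two_ne_zero) hFhom.self_of_nhds] at h
    linarith
  simp only [iprod_eq_dotProduct_mulVec, gF_mulVec_nablaV hginvz u]
  rw [hXV, dotProduct_mulVec_sub_smul_self hsymm horth, dotProduct_gF_mulVec_self hF2 hFhom,
    ← mul_pow, div_mul_cancel₀ a hFz]
  simp only [mulVec_sub, sub_dotProduct, dotProduct_sub, dotProduct_mulVec_comm_of_isSymm hsymm P R]
  ring

end Pythagoras

end MagneticField

end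

/-- **Squared-norm commutation formula** (used to combine with the Pestov
identity): for a function `u` positively homogeneous of degree 0, on the set
where `F = 1`,
`|X(∇·u)|² = |∇·(Xu)|² + |∇:u|² − 2⟨∇:u, ∇·(Xu)⟩ + ⟨Y(y), ∇·u⟩²`. -/
theorem stmt_13 (n : ℕ) (hn : 1 ≤ n) (W : Set (Pt n)) (hWopen : IsOpen W)
    (hWy : ∀ z ∈ W, z.2 ≠ 0)
    (hWcone : ∀ z ∈ W, ∀ t : ℝ, 0 < t → (z.1, t • z.2) ∈ W)
    (F : Pt n → ℝ) (hFsmooth : ContDiffOn ℝ (⊤ : ℕ∞) F W)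
    (hFpos : ∀ z ∈ W, 0 < F z)
    (hFhom : ∀ z ∈ W, ∀ t : ℝ, 0 < t → F (z.1, t • z.2) = t * F z)
    (ginv : Fin n → Fin n → Pt n → ℝ)
    (hginv : ∀ z ∈ W, ∀ i j, ∑ k, gF F i k z * ginv k j z = if i = j then (1:ℝ) else 0)
    (hginv' : ∀ z ∈ W, ∀ i j, ∑ k, ginv i k z * gF F k j z = if i = j then (1:ℝ) else 0)
    (Γ : Fin n → Fin n → Fin n → Pt n → ℝ)
    (hΓsmooth : ∀ i j k, ContDiffOn ℝ (⊤ : ℕ∞) (Γ i j k) W)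
    (hΓsym : ∀ i j k, ∀ z ∈ W, Γ i j k z = Γ i k j z)
    (hcompat : ∀ z ∈ W, ∀ j l m,
      pdx m (gF F j l) z =
        ∑ k, (gF F k l z * Γ k j m z + gF F k j z * Γ k l m z
          + 2 * CF F j k l z * Nc Γ k m z))
    (hspray : ∀ z ∈ W, ∀ i l, (∑ j, ∑ k, z.2 j * z.2 k * pdy l (Γ i j k) z) = 0)
    (Ω : Fin n → Fin n → (Fin n → ℝ) → ℝ)
    (hΩsmooth : ∀ j k, ContDiffOn ℝ (⊤ : ℕ∞) (fun z : Pt n => Ω j k z.1) W)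
    (hΩanti : ∀ z ∈ W, ∀ j k, Ω j k z.1 = -Ω k j z.1)
    (u : Pt n → ℝ) (hu : ContDiffOn ℝ (⊤ : ℕ∞) u W)
    (huhom : ∀ z ∈ W, ∀ t : ℝ, 0 < t → u (z.1, t • z.2) = u z) :
    ∀ z ∈ W, F z = 1 →
      iprod F (XVec F Γ Ω ginv (nablaV ginv u)) (XVec F Γ Ω ginv (nablaV ginv u)) z
        = iprod F (nablaV ginv (Xs F Γ Ω ginv u)) (nablaV ginv (Xs F Γ Ω ginv u)) z
          + iprod F (nablaM F Γ Ω ginv u) (nablaM F Γ Ω ginv u) z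
          - 2 * iprod F (nablaM F Γ Ω ginv u) (nablaV ginv (Xs F Γ Ω ginv u)) z
          + iprod F (Yy Ω ginv) (nablaV ginv u) z ^ 2 := by
  intro z hz _
  have hW : W ∈ nhds z := hWopen.mem_nhds hz
  exact stmt_13_general
    (mod_cast contDiffAt_infty.1 (hFsmooth.contDiffAt hW) 3) (hFpos z hz).ne'
    (Filter.eventually_of_mem hW hFhom) (Filter.eventually_of_mem hW hginv)
    (fun i j k => ((hΓsmooth i j k).contDiffAt hW).differentiableAt (by simp))
    (fun i j k => hΓsym i j k z hz) (hcompat z hz) (hspray z hz)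
    (fun j k => ((hΩsmooth j k).contDiffAt hW).differentiableAt (by simp))
    (mod_cast contDiffAt_infty.1 (hu.contDiffAt hW) 2) (Filter.eventually_of_mem hW huhom)

end
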